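/- arXiv:2107.03753 — 2 statements merged into one kernel-verified Lean document; each statement's English description precedes it below -/
import Mathlib

section
/- There is no Z/pZ-invariant element u ∈ (k^4)^{⊗p} satisfying d_0^{⊗p}(u) = v and d_i^{⊗p}(u) = 0 for i = 1,2,3,4. -/
/-!
Words of length `p` in `n` letters are the basis of `(k^n)^{⊗p}`. The proof writes down a functional
on the invariants of `(k^3)^{⊗p}` that vanishes on alternating sums of faces and is nonzero on `v`.

The matrices `d_i` are the face maps of the `p`-th tensor power of the reduced chains of a simplicial
circle, so words are cells of the smash power `(S^1)^{∧p}`, on which `ℤ/p` acts freely away from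
the constant words (the diagonal `S^1`). Relative to the diagonal the orbit space is a double
suspension of a (possibly low-dimensional) lens space, and `v` comes from its class in `H_1`. That
class is detected by the class in `H^1(-; k)` of the `ℤ/p`-covering, which is explicit here. For a
nonconstant word `w` in two letters let `tt w` in `k` be the average position of the letter `1`;
then `tt` increases by `1` under rotation (`tt_rot_one`). The indicator of the nonconstant words is a
cocycle, so the coboundary `phi` of `tt` is rotation invariant (`phi_rot`), and it is itself a
cocycle (`coboundary_phi`).

To turn an invariant function on words into a functional on invariant tensors, each orbit has to be
counted once. This is done by a weight `theta` with total mass `1` on each nonconstant orbit. The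
functional of `theta * phi` composed with the alternating sum of the `d_i` has zero orbit sums,
hence kills invariant tensors (`ev_eq_zero`). If `u` existed, `theta * phi` would therefore vanish
on `v`, but its value there is `1 - 2 + 3 - ⋯ - (p - 1) = -(p - 1) / 2 ≠ 0` (`ev_vEl`).
-/

open scoped TensorProduct
open PiTensorProduct

noncomputable section

/-- The `p`-th tensor power of `R^n`. -/
abbrev TP (R : Type) [CommRing R] (p n : ℕ) : Type :=
  ⨂[R] (_ : Fin p), (Fin n → R)

/-- The cyclic permutation `σ` of the tensor factors,
`σ (w₁ ⊗ ⋯ ⊗ w_p) = w_p ⊗ w₁ ⊗ ⋯ ⊗ w_{p-1}`; it generates the action of `ℤ/pℤ`. -/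
def cyc (R : Type) [CommRing R] (p n : ℕ) : TP R p n ≃ₗ[R] TP R p n :=
  PiTensorProduct.reindex R (fun _ : Fin p => (Fin n → R)) (finRotate p)

/-- The matrices `G₁ = e`, `G₂ = h`, `G₃ = f`. -/
def stdG (R : Type) [CommRing R] : Fin 3 → Matrix (Fin 2) (Fin 2) R :=
  ![!![0, 1; 0, 0], !![1, 0; 0, -1], !![0, 0; 1, 0]]

/-- `τ_λ` on the standard basis vectors: `τ_λ(b₁) = (-2,0,0)`, `τ_λ(b₂) = (λ,1-λ,λ)`,
`τ_λ(b₃) = (0,0,2λ)`. -/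
def tau (R : Type) [CommRing R] (l : R) : Fin 3 → (Fin 3 → R) :=
  ![![-2, 0, 0], ![l, 1 - l, l], ![0, 0, 2 * l]]

/-- `t_λ = Σ_w tr(G_{w 1} ⋯ G_{w p}) • τ_λ(b_{w 1}) ⊗ ⋯ ⊗ τ_λ(b_{w p})`. -/
def tEl (R : Type) [CommRing R] (p : ℕ) (l : R) : TP R p 3 :=
  ∑ w : Fin p → Fin 3,
    (List.ofFn fun i => stdG R (w i)).prod.trace • tprod R fun i => tau R l (w i)

/-- The matrices of the face maps `d₀, d₁, d₂, d₃ : k³ → k²`. -/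
def d32 (R : Type) [CommRing R] : Fin 4 → Matrix (Fin 2) (Fin 3) R :=
  ![!![0, 1, 0; 0, 0, 1], !![1, 1, 0; 0, 0, 1], !![1, 0, 0; 0, 1, 1], !![1, 0, 0; 0, 1, 0]]

/-- The matrices of the face maps `d₀, d₁, d₂, d₃, d₄ : k⁴ → k³`. -/
def d43 (R : Type) [CommRing R] : Fin 5 → Matrix (Fin 3) (Fin 4) R :=
  ![!![0, 1, 0, 0; 0, 0, 1, 0; 0, 0, 0, 1], !![1, 1, 0, 0; 0, 0, 1, 0; 0, 0, 0, 1],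
    !![1, 0, 0, 0; 0, 1, 1, 0; 0, 0, 0, 1], !![1, 0, 0, 0; 0, 1, 0, 0; 0, 0, 1, 1],
    !![1, 0, 0, 0; 0, 1, 0, 0; 0, 0, 1, 0]]

/-- `g^{⊗p}`, the `p`-th tensor power of the linear map with matrix `A`. -/
def tpow (R : Type) [CommRing R] (p : ℕ) {m n : ℕ} (A : Matrix (Fin m) (Fin n) R) :
    TP R p n →ₗ[R] TP R p m :=
  PiTensorProduct.map fun _ => A.mulVecLin


/-- The word (function `Fin p → Fin 3`) describing the pure tensor
`b₁ ⊗ b₂^{⊗(p-2-a)} ⊗ b₃ ⊗ b₂^{⊗a}` (indices `0,1,2` stand for `b₁,b₂,b₃`). -/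
def vWord (p a : ℕ) : Fin p → Fin 3 := fun i =>
  if (i : ℕ) = 0 then 0 else if (i : ℕ) = p - 1 - a then 2 else 1

/-- `v = Σ_{a=0}^{p-2} (-1)^a Σ_{j=0}^{p-1} σʲ (b₁ ⊗ b₂^{⊗(p-2-a)} ⊗ b₃ ⊗ b₂^{⊗a})`. -/
def vEl (R : Type) [CommRing R] (p : ℕ) : TP R p 3 :=
  ∑ a ∈ Finset.range (p - 1), (-1 : R) ^ a •
    ∑ j ∈ Finset.range p,
      (⇑(cyc R p 3))^[j] (tprod R fun i => (Pi.single (vWord p a i) 1 : Fin 3 → R))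

open Finset

/-! ### Functionals on tensor powers and their pullbacks -/

section Pullback

variable {k : Type} [Field k] {p : ℕ}

/-- The transpose of `A^{⊗p}`, acting on functions on words (a function `f` on words of length `p`
stands for the linear functional taking the value `f w` on the basis tensor of `w`). -/
def pull {m n : ℕ} (A : Matrix (Fin m) (Fin n) k) (f : (Fin p → Fin m) → k) :
    (Fin p → Fin n) → k :=
  fun w => ∑ y : Fin p → Fin m, f y * ∏ i, A (y i) (w i)

/-- The linear functional on the tensor power with value `f w` on the basis tensor of `w`. -/
def ev {n : ℕ} (f : (Fin p → Fin n) → k) : TP k p n →ₗ[k] k :=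
  PiTensorProduct.lift (∑ w : Fin p → Fin n, f w •
    (MultilinearMap.mkPiAlgebra k (Fin p) k).compLinearMap
      (fun i => (LinearMap.proj (w i) : (Fin n → k) →ₗ[k] k)))

lemma ev_tprod {n : ℕ} (f : (Fin p → Fin n) → k) (x : Fin p → Fin n → k) :
    ev f (tprod k x) = ∑ w : Fin p → Fin n, f w * ∏ i, x i (w i) := by
  simp [ev]

lemma ev_basis {n : ℕ} (f : (Fin p → Fin n) → k) (w : Fin p → Fin n) :
    ev f (tprod k fun i => (Pi.single (w i) 1 : Fin n → k)) = f w := by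
  rw [ev_tprod, Finset.sum_eq_single w]
  · simp
  · intro y _ hy
    obtain ⟨i, hi⟩ := Function.ne_iff.mp hy
    rw [Finset.prod_eq_zero (mem_univ i), mul_zero]
    simp [hi]
  · simp

lemma ev_sum {n : ℕ} {ι : Type} (s : Finset ι) (F : ι → (Fin p → Fin n) → k) (u : TP k p n) :
    ev (fun w => ∑ j ∈ s, F j w) u = ∑ j ∈ s, ev (F j) u := by
  have : ev (fun w => ∑ j ∈ s, F j w) = ∑ j ∈ s, ev (F j) := by
    refine PiTensorProduct.ext (MultilinearMap.ext fun x => ?_)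
    simp only [LinearMap.compMultilinearMap_apply, LinearMap.sum_apply, ev_tprod, sum_mul]
    exact sum_comm
  rw [this, LinearMap.sum_apply]

lemma ev_smul {n : ℕ} (c : k) (f : (Fin p → Fin n) → k) (u : TP k p n) :
    ev (fun w => c * f w) u = c * ev f u := by
  have : ev (fun w => c * f w) = c • ev f := by
    refine PiTensorProduct.ext (MultilinearMap.ext fun x => ?_)
    simp only [LinearMap.compMultilinearMap_apply, LinearMap.smul_apply, ev_tprod, smul_eq_mul,
      mul_sum, mul_assoc]
  rw [this, LinearMap.smul_apply, smul_eq_mul]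

lemma ev_tpow {m n : ℕ} (A : Matrix (Fin m) (Fin n) k) (f : (Fin p → Fin m) → k)
    (u : TP k p n) : ev f (tpow k p A u) = ev (pull A f) u := by
  have : (ev f).comp (tpow k p A) = ev (pull A f) := by
    refine PiTensorProduct.ext (MultilinearMap.ext fun x => ?_)
    simp only [LinearMap.compMultilinearMap_apply, LinearMap.comp_apply, tpow,
      PiTensorProduct.map_tprod, ev_tprod, pull, Matrix.mulVecLin_apply, Matrix.mulVec, dotProduct,
      Finset.prod_univ_sum, Fintype.piFinset_univ, mul_sum, sum_mul, prod_mul_distrib]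
    rw [sum_comm]
    simp only [mul_assoc]
  rw [← this, LinearMap.comp_apply]

lemma pull_pull {l m n : ℕ} (A : Matrix (Fin m) (Fin n) k) (B : Matrix (Fin l) (Fin m) k)
    (f : (Fin p → Fin l) → k) : pull A (pull B f) = pull (B * A) f := by
  funext w
  simp only [pull, Matrix.mul_apply, Finset.prod_univ_sum, Fintype.piFinset_univ, mul_sum, sum_mul,
    prod_mul_distrib]
  rw [sum_comm]
  simp only [mul_assoc]

lemma pull_sum {m n : ℕ} (A : Matrix (Fin m) (Fin n) k) {ι : Type} (s : Finset ι)
    (F : ι → (Fin p → Fin m) → k) (w : Fin p → Fin n) :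
    pull A (fun y => ∑ j ∈ s, F j y) w = ∑ j ∈ s, pull A (F j) w := by
  simp only [pull, sum_mul]
  exact sum_comm

lemma pull_smul {m n : ℕ} (A : Matrix (Fin m) (Fin n) k) (c : k)
    (f : (Fin p → Fin m) → k) (w : Fin p → Fin n) :
    pull A (fun y => c * f y) w = c * pull A f w := by
  simp only [pull, mul_sum, mul_assoc]

lemma pull_add {m n : ℕ} (A : Matrix (Fin m) (Fin n) k)
    (f g : (Fin p → Fin m) → k) (w : Fin p → Fin n) :
    pull A (fun y => f y + g y) w = pull A f w + pull A g w := by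
  simp only [pull, add_mul, sum_add_distrib]

/-- If a column of `A` vanishes (a face map kills the corresponding letter), pulled-back functions
vanish on the words using that letter. -/
lemma pull_eq_zero {m n : ℕ} (A : Matrix (Fin m) (Fin n) k) (f : (Fin p → Fin m) → k)
    (w : Fin p → Fin n) (i : Fin p) (h : ∀ r, A r (w i) = 0) : pull A f w = 0 :=
  sum_eq_zero fun y _ => by rw [prod_eq_zero (mem_univ i) (h _), mul_zero]

lemma pull_of_map {m n : ℕ} (A : Matrix (Fin m) (Fin n) k) (f : (Fin p → Fin m) → k)
    (w : Fin p → Fin n) (y : Fin p → Fin m)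
    (h : ∀ i r, A r (w i) = if r = y i then 1 else 0) : pull A f w = f y := by
  rw [pull, Finset.sum_eq_single y]
  · simp [h]
  · intro z _ hz
    obtain ⟨i, hi⟩ := Function.ne_iff.mp hz
    rw [Finset.prod_eq_zero (mem_univ i), mul_zero]
    simp [h, hi]
  · simp

/-- A matrix each of whose columns has at most one nonzero entry sends basis vectors to multiples of
basis vectors, hence constant words to multiples of constant words. -/
lemma pull_const {m n : ℕ} (A : Matrix (Fin m) (Fin n) k)
    (hA : ∀ c r r', r ≠ r' → A r c = 0 ∨ A r' c = 0) (f : (Fin p → Fin m) → k)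
    (hf : ∀ y, (∀ i j, y i = y j) → f y = 0) (w : Fin p → Fin n) (hw : ∀ i j, w i = w j) :
    pull A f w = 0 := by
  refine sum_eq_zero fun y _ => ?_
  by_cases hy : ∀ i j, y i = y j
  · rw [hf y hy, zero_mul]
  · push Not at hy
    obtain ⟨i, j, hij⟩ := hy
    rcases hA (w i) _ _ hij with h | h
    · rw [prod_eq_zero (mem_univ i) h, mul_zero]
    · rw [hw i j] at h
      rw [prod_eq_zero (mem_univ j) h, mul_zero]

end Pullback

/-! ### Rotation of words and functionals on invariant tensors -/

section Rotation

variable {k : Type} [Field k] {p : ℕ} [NeZero p]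

/-- Rotation of a word by `c` places to the right. -/
def rot {n : ℕ} (c : Fin p) (w : Fin p → Fin n) : Fin p → Fin n := fun i => w (i - c)

lemma rot_zero {n : ℕ} (w : Fin p → Fin n) : rot 0 w = w := by
  funext i; simp [rot]

lemma rot_rot {n : ℕ} (c d : Fin p) (w : Fin p → Fin n) : rot c (rot d w) = rot (d + c) w := by
  funext i; simp only [rot]; congr 1; abel

lemma ofNat_succ (j : ℕ) : Fin.ofNat p (j + 1) = Fin.ofNat p j + 1 := by
  ext; simp [Fin.val_add]

lemma pull_rot {m n : ℕ} (A : Matrix (Fin m) (Fin n) k) (f : (Fin p → Fin m) → k) (c : Fin p)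
    (w : Fin p → Fin n) : pull A f (rot c w) = pull A (fun y => f (rot c y)) w := by
  simp only [pull]
  refine (Fintype.sum_equiv ((Equiv.subRight c).arrowCongr (Equiv.refl _)).symm _ _ ?_).symm
  intro y
  have h : ((Equiv.subRight c).arrowCongr (Equiv.refl (Fin m))).symm y = rot c y := by
    funext i; simp [rot]
  rw [h]
  congr 1
  exact (Fintype.prod_equiv (Equiv.subRight c) _ _ (fun i => by simp [rot])).symm

lemma finRotate_symm_eq (i : Fin p) : (finRotate p).symm i = i - 1 := by
  rw [Equiv.symm_apply_eq]
  simp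

lemma cyc_tprod {n : ℕ} (x : Fin p → Fin n → k) :
    cyc k p n (tprod k x) = tprod k fun i => x (i - 1) := by
  rw [cyc, PiTensorProduct.reindex_tprod]
  simp only [finRotate_symm_eq]

lemma cyc_iterate {n : ℕ} (x : Fin p → Fin n → k) (j : ℕ) :
    (⇑(cyc k p n))^[j] (tprod k x) = tprod k fun i => x (i - Fin.ofNat p j) := by
  induction j with
  | zero => simp
  | succ j ih =>
    rw [Function.iterate_succ_apply', ih, cyc_tprod]
    congr 1; funext i
    rw [ofNat_succ, sub_sub, add_comm (1 : Fin p)]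

lemma ev_rot {n : ℕ} (u : TP k p n) (hu : cyc k p n u = u) (f : (Fin p → Fin n) → k) (c : Fin p) :
    ev (fun w => f (rot c w)) u = ev f u := by
  have one : ∀ f : (Fin p → Fin n) → k, ev (fun w => f (rot 1 w)) u = ev f u := by
    intro f
    have : (ev f).comp (cyc k p n).toLinearMap = ev (fun w => f (rot 1 w)) := by
      refine PiTensorProduct.ext (MultilinearMap.ext fun x => ?_)
      simp only [LinearMap.compMultilinearMap_apply, LinearMap.comp_apply,
        LinearEquiv.coe_coe, cyc_tprod, ev_tprod]
      refine (Fintype.sum_equiv ((Equiv.subRight (1 : Fin p)).arrowCongr (Equiv.refl _)).symm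
        _ _ ?_).symm
      intro y
      have h : ((Equiv.subRight (1 : Fin p)).arrowCongr (Equiv.refl (Fin n))).symm y
          = rot 1 y := by
        funext i; simp [rot]
      rw [h]
      congr 1
      exact (Fintype.prod_equiv (Equiv.subRight 1) _ _ (fun i => by simp [rot])).symm
    rw [← this, LinearMap.comp_apply, LinearEquiv.coe_coe, hu]
  have key : ∀ j : ℕ, ∀ f : (Fin p → Fin n) → k,
      ev (fun w => f (rot (Fin.ofNat p j) w)) u = ev f u := by
    intro j
    induction j with
    | zero => intro f; simp [rot_zero]
    | succ j ih =>
      intro f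
      rw [← one f, ← ih (fun w => f (rot 1 w))]
      simp only [ofNat_succ, rot_rot]
  have h := key c.val f
  simpa using h

/-- A weight on words whose sum over the rotations of any nonconstant word is `1`: the
reciprocal of the number of occurrences of the least letter if the word starts with that letter,
and `0` otherwise. -/
def theta {n : ℕ} (w : Fin p → Fin n) : k :=
  (if ∀ j, w 0 ≤ w j then 1 else 0) / ∑ i, (if ∀ j, w i ≤ w j then 1 else 0)

omit [NeZero p] in
lemma cast_card_ne_zero [Fact p.Prime] [CharP k p] (P : Fin p → Prop) [DecidablePred P]
    (h1 : ∃ i, P i) (h2 : ∃ i, ¬ P i) : (∑ i, (if P i then (1 : k) else 0)) ≠ 0 := by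
  rw [Finset.sum_boole, Ne, CharP.cast_eq_zero_iff k p]
  refine Nat.not_dvd_of_pos_of_lt ?_ ?_
  · obtain ⟨i, hi⟩ := h1
    exact card_pos.mpr ⟨i, by simpa⟩
  · obtain ⟨i, hi⟩ := h2
    have := card_lt_univ_of_notMem (s := univ.filter P) (x := i) (by simpa)
    simpa using this

lemma sum_theta [Fact p.Prime] [CharP k p] {n : ℕ} (w : Fin p → Fin n)
    (hw : ¬ ∀ i j, w i = w j) : ∑ c : Fin p, (theta (rot c w) : k) = 1 := by
  have h1 : ∀ (c i : Fin p), (∀ j, rot c w i ≤ rot c w j) ↔ ∀ j, w (i - c) ≤ w j := by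
    intro c i
    exact ⟨fun h j => by simpa [rot] using h (j + c), fun h j => h _⟩
  have h2 : ∀ c : Fin p, (∑ i, (if ∀ j, w (i - c) ≤ w j then (1 : k) else 0))
      = ∑ i, (if ∀ j, w i ≤ w j then (1 : k) else 0) := fun c =>
    Fintype.sum_equiv (Equiv.subRight c) _ _ (fun i => by simp)
  have h3 : (∑ c : Fin p, (if ∀ j, w (0 - c) ≤ w j then (1 : k) else 0))
      = ∑ i, (if ∀ j, w i ≤ w j then (1 : k) else 0) :=
    Fintype.sum_equiv (Equiv.neg (Fin p)) _ _ (fun i => by simp)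
  simp only [theta, h1, h2]
  rw [← sum_div, h3, div_self]
  apply cast_card_ne_zero
  · obtain ⟨i, -, hi⟩ := exists_min_image univ w univ_nonempty
    exact ⟨i, fun j => hi j (mem_univ j)⟩
  · by_contra! h
    exact hw fun i j => le_antisymm (h i j) (h j i)

/-- A functional whose sums over all rotation orbits vanish kills the invariant tensors. The
vanishing on constant words is a separate hypothesis, since summing a constant word over its `p`
rotations gives `0` in characteristic `p`. -/
lemma ev_eq_zero [Fact p.Prime] [CharP k p] {n : ℕ} (u : TP k p n) (hu : cyc k p n u = u)
    (f : (Fin p → Fin n) → k) (hc : ∀ w, (∀ i j, w i = w j) → f w = 0)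
    (hf : ∀ w, ∑ c : Fin p, f (rot c w) = 0) : ev f u = 0 := by
  have h1 : f = fun w => ∑ c : Fin p, theta (rot c w) * f w := by
    funext w
    rw [← sum_mul]
    by_cases hw : ∀ i j, w i = w j
    · rw [hc w hw, mul_zero]
    · rw [sum_theta w hw, one_mul]
  have h2 : ∀ c : Fin p, ev (fun w => theta (rot c w) * f w) u
      = ev (fun w => theta w * f (rot (-c) w)) u := by
    intro c
    rw [← ev_rot u hu (fun w => theta w * f (rot (-c) w)) c]
    congr 2; funext w
    rw [rot_rot, add_neg_cancel, rot_zero]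
  rw [h1, ev_sum]
  simp only [h2]
  rw [← ev_sum]
  have h3 : (fun w : Fin p → Fin n => ∑ c : Fin p, theta w * f (rot (-c) w)) = fun w => 0 * f w := by
    funext w
    have h4 : ∑ c : Fin p, f (rot (-c) w) = ∑ c : Fin p, f (rot c w) :=
      Fintype.sum_equiv (Equiv.neg (Fin p)) _ _ (fun _ => rfl)
    rw [← mul_sum, zero_mul, h4, hf, mul_zero]
  rw [h3, ev_smul, zero_mul]

end Rotation

/-! ### The degree three cocycle -/

section Cocycle

variable {k : Type} [Field k] {p : ℕ}

/-- The average, in `k`, of the positions of the letter `1` in a word in the letters `0`, `1`. On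
constant words the numerator or the number of occurrences is `0` in `k` (when `k` has characteristic
`p`), so the value is `0`. -/
def tt (w : Fin p → Fin 2) : k :=
  (∑ i : Fin p, ((i : ℕ) : k) * (if w i = 1 then 1 else 0)) / ∑ i, (if w i = 1 then 1 else 0)

/-- The matrices of the face maps `k² → k`. -/
def d21 (k : Type) [Field k] : Fin 3 → Matrix (Fin 1) (Fin 2) k :=
  ![!![0, 1], !![1, 1], !![1, 0]]

/-- The coboundary of `tt`. It is rotation invariant and represents the class in degree `3` that
detects `v`. -/
def phi (w : Fin p → Fin 3) : k := ∑ j : Fin 4, (-1) ^ (j : ℕ) * pull (d32 k j) tt w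

lemma cast_val_add_one [CharP k p] [NeZero p] (i : Fin p) :
    (((i + 1 : Fin p) : ℕ) : k) = (i : ℕ) + 1 := by
  have h : ((i + 1 : Fin p) : ℕ) ≡ (i : ℕ) + 1 [MOD p] := by
    rw [Fin.val_add, Fin.val_one', Nat.ModEq]
    simp
  have := (CharP.cast_eq_iff_mod_eq k p).mpr h
  simpa using this

lemma tt_const [CharP k p] (w : Fin p → Fin 2) (hw : ∀ i j, w i = w j) : (tt w : k) = 0 := by
  by_cases h : ∃ i, w i = 1
  · obtain ⟨i, hi⟩ := h
    have h1 : ∀ j, w j = 1 := fun j => (hw j i).trans hi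
    simp [tt, h1]
  · push Not at h
    simp [tt, h]

/-- Minus the coboundary of the constant function `1` is the indicator of the nonconstant words.
Rotating a nonconstant word by one place shifts its average position by `1`, while constant words
are fixed. -/
lemma tt_rot_one [Fact p.Prime] [CharP k p] [NeZero p] (w : Fin p → Fin 2) :
    (tt (rot 1 w) : k) = tt w + ∑ l : Fin 3, -(-1) ^ (l : ℕ) * pull (d21 k l) (fun _ => 1) w := by
  have not_one : ∀ c : Fin 2, c ≠ 1 → c = 0 := by decide
  have e1 : pull (d21 k 1) (fun _ : Fin p → Fin 1 => (1 : k)) w = 1 := by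
    refine pull_of_map _ _ w 0 fun i r => ?_
    generalize w i = c
    fin_cases c <;> fin_cases r <;> simp [d21]
  have e0 : pull (d21 k 0) (fun _ : Fin p → Fin 1 => (1 : k)) w
      = if ∃ i, w i = 0 then 0 else 1 := by
    split_ifs with h
    · obtain ⟨i, hi⟩ := h
      exact pull_eq_zero _ _ w i fun r => by rw [hi]; fin_cases r; simp [d21]
    · refine pull_of_map _ _ w 0 fun i r => ?_
      have : w i = 1 := Fin.eq_one_of_ne_zero _ fun hi => h ⟨i, hi⟩
      rw [this]; fin_cases r; simp [d21]
  have e2 : pull (d21 k 2) (fun _ : Fin p → Fin 1 => (1 : k)) w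
      = if ∃ i, w i = 1 then 0 else 1 := by
    split_ifs with h
    · obtain ⟨i, hi⟩ := h
      exact pull_eq_zero _ _ w i fun r => by rw [hi]; fin_cases r; simp [d21]
    · refine pull_of_map _ _ w 0 fun i r => ?_
      have : w i = 0 := not_one _ fun hi => h ⟨i, hi⟩
      rw [this]; fin_cases r; simp [d21]
  rw [Fin.sum_univ_three, e0, e1, e2]
  by_cases h0 : ∃ i, w i = 0
  · by_cases h1 : ∃ i, w i = 1
    · have hm : (∑ i, (if w i = 1 then (1 : k) else 0)) ≠ 0 := by
        refine cast_card_ne_zero _ h1 ?_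
        obtain ⟨i, hi⟩ := h0
        exact ⟨i, by simp [hi]⟩
      have hden : (∑ i, (if rot 1 w i = 1 then (1 : k) else 0))
          = ∑ i, (if w i = 1 then (1 : k) else 0) :=
        Fintype.sum_equiv (Equiv.subRight 1) _ _ (fun _ => rfl)
      have hnum : (∑ i : Fin p, ((i : ℕ) : k) * (if rot 1 w i = 1 then 1 else 0))
          = (∑ i : Fin p, ((i : ℕ) : k) * (if w i = 1 then 1 else 0))
            + ∑ i, (if w i = 1 then (1 : k) else 0) := by
        rw [← sum_add_distrib]
        refine (Fintype.sum_equiv (Equiv.addRight 1) _ _ (fun i => ?_)).symm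
        simp only [Equiv.coe_addRight, cast_val_add_one, rot, add_sub_cancel_right]
        ring
      rw [tt, tt, hden, hnum, add_div, div_self hm]
      simp [h0, h1]
    · have hc : ∀ i, w i = 0 := fun i => not_one _ fun hi => h1 ⟨i, hi⟩
      rw [tt_const w (by simp [hc]), tt_const (rot 1 w) (by simp [rot, hc])]
      simp [hc]
  · have hc : ∀ i, w i = 1 := fun i => Fin.eq_one_of_ne_zero _ fun hi => h0 ⟨i, hi⟩
    rw [tt_const w (by simp [hc]), tt_const (rot 1 w) (by simp [rot, hc])]
    simp [hc]

lemma d32_mul_d43 (i : Fin 5) (j : Fin 4) (h : (j : ℕ) < i) :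
    d32 k j * d43 k i = d32 k ⟨i - 1, by omega⟩ * d43 k ⟨j, by omega⟩ := by
  fin_cases i <;> fin_cases j <;> first
    | (exfalso; revert h; decide)
    | (simp [d32, d43])

lemma d21_mul_d32 (i : Fin 4) (j : Fin 3) (h : (j : ℕ) < i) :
    d21 k j * d32 k i = d21 k ⟨i - 1, by omega⟩ * d32 k ⟨j, by omega⟩ := by
  fin_cases i <;> fin_cases j <;> first
    | (exfalso; revert h; decide)
    | (simp [d21, d32])

/-- The square of the coboundary is zero, from `2`-letter to `4`-letter words. -/
lemma coboundary_phi (w : Fin p → Fin 4) :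
    ∑ i : Fin 5, (-1 : k) ^ (i : ℕ) * pull (d43 k i) phi w = 0 := by
  have h (i : Fin 5) : pull (d43 k i) phi w
      = ∑ j : Fin 4, (-1 : k) ^ (j : ℕ) * pull (d32 k j * d43 k i) tt w := by
    have : (phi : (Fin p → Fin 3) → k)
        = fun y => ∑ j : Fin 4, (-1) ^ (j : ℕ) * pull (d32 k j) tt y := rfl
    rw [this, pull_sum]
    refine sum_congr rfl fun j _ => ?_
    rw [pull_smul]
    exact congrArg _ (congrFun (pull_pull _ _ _) w)
  simp only [h, Fin.sum_univ_five, Fin.sum_univ_four]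
  rw [d32_mul_d43 1 0 (by decide), d32_mul_d43 2 0 (by decide), d32_mul_d43 3 0 (by decide),
    d32_mul_d43 4 0 (by decide), d32_mul_d43 2 1 (by decide), d32_mul_d43 3 1 (by decide),
    d32_mul_d43 4 1 (by decide), d32_mul_d43 3 2 (by decide), d32_mul_d43 4 2 (by decide),
    d32_mul_d43 4 3 (by decide)]
  simp
  ring

/-- The square of the coboundary is zero, from `1`-letter to `3`-letter words. -/
lemma coboundary_coboundary_one (w : Fin p → Fin 3) :
    ∑ j : Fin 4, (-1 : k) ^ (j : ℕ) *
      pull (d32 k j) (fun y => ∑ l : Fin 3, -(-1) ^ (l : ℕ) * pull (d21 k l) (fun _ => 1) y) w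
      = 0 := by
  have h (j : Fin 4) :
      pull (d32 k j) (fun y => ∑ l : Fin 3, -(-1) ^ (l : ℕ) * pull (d21 k l) (fun _ => 1) y) w
      = ∑ l : Fin 3, -(-1 : k) ^ (l : ℕ) * pull (d21 k l * d32 k j) (fun _ => 1) w := by
    rw [pull_sum]
    refine sum_congr rfl fun l _ => ?_
    rw [pull_smul]
    exact congrArg _ (congrFun (pull_pull _ _ _) w)
  simp only [h]
  simp only [Fin.sum_univ_four, Fin.sum_univ_three]
  rw [d21_mul_d32 1 0 (by decide), d21_mul_d32 2 0 (by decide), d21_mul_d32 3 0 (by decide),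
    d21_mul_d32 2 1 (by decide), d21_mul_d32 3 1 (by decide), d21_mul_d32 3 2 (by decide)]
  simp
  ring

lemma phi_rot [Fact p.Prime] [CharP k p] [NeZero p] (c : Fin p) (w : Fin p → Fin 3) :
    (phi (rot c w) : k) = phi w := by
  have one : ∀ w : Fin p → Fin 3, (phi (rot 1 w) : k) = phi w := by
    intro w
    simp only [phi, pull_rot, tt_rot_one, pull_add, mul_add, sum_add_distrib]
    rw [coboundary_coboundary_one, add_zero]
  have key : ∀ j : ℕ, (phi (rot (Fin.ofNat p j) w) : k) = phi w := by
    intro j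
    induction j with
    | zero => simp [rot_zero]
    | succ j ih => rw [ofNat_succ, ← rot_rot, one, ih]
  simpa using key c.val

lemma phi_const [CharP k p] (w : Fin p → Fin 3) (hw : ∀ i j, w i = w j) : (phi w : k) = 0 := by
  refine sum_eq_zero fun j _ => ?_
  rw [pull_const _ _ _ tt_const w hw, mul_zero]
  intro c r r'
  fin_cases j <;> fin_cases c <;> fin_cases r <;> fin_cases r' <;> simp [d32]

/-- Restricting `phi` to orbit representatives by means of `theta` loses nothing. -/
lemma sum_theta_mul_phi [Fact p.Prime] [CharP k p] [NeZero p] (w : Fin p → Fin 3) :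
    ∑ c : Fin p, (theta (rot c w) * phi (rot c w) : k) = phi w := by
  simp only [phi_rot]
  rw [← sum_mul]
  by_cases hw : ∀ i j, w i = w j
  · rw [phi_const w hw, mul_zero]
  · rw [sum_theta w hw, one_mul]

/-- Only the two middle faces of the word `b₁ b₂^{p-2-a} b₃ b₂^a` survive: merging `b₁` and `b₂`
leaves a single letter `1`, at position `p - 1 - a`, and merging `b₂` and `b₃` leaves the letter `1`
at all positions but `0`, with average position `0`. -/
lemma phi_vWord [Fact p.Prime] [CharP k p] (hp3 : 3 ≤ p) (a : ℕ) (ha : a < p - 1) :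
    (phi (vWord p a) : k) = a + 1 := by
  have hp0 : (p : k) = 0 := CharP.cast_eq_zero k p
  have f0 : pull (d32 k 0) tt (vWord p a) = 0 :=
    pull_eq_zero _ _ _ (⟨0, by omega⟩ : Fin p) fun r => by
      fin_cases r <;> simp [d32, vWord]
  have f3 : pull (d32 k 3) tt (vWord p a) = 0 :=
    pull_eq_zero _ _ _ (⟨p - 1 - a, by omega⟩ : Fin p) fun r => by
      have : vWord p a ⟨p - 1 - a, by omega⟩ = 2 := by
        have : p - 1 - a ≠ 0 := by omega
        simp [vWord, this]
      rw [this]; fin_cases r <;> simp [d32]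
  have f1 : pull (d32 k 1) tt (vWord p a) = -((a : k) + 1) := by
    rw [pull_of_map _ _ _ (fun i => if i = ⟨p - 1 - a, by omega⟩ then 1 else 0)]
    · have : ((p - 1 - a : ℕ) : k) = -((a : k) + 1) := by
        rw [Nat.cast_sub (by omega), Nat.cast_sub (by omega), hp0]; push_cast; ring
      simp [tt, this]
    · intro i r
      have : p - 1 - a ≠ 0 := by omega
      by_cases h0 : (i : ℕ) = 0
      · fin_cases r <;> simp [vWord, d32, h0, Fin.ext_iff, this.symm]
      · by_cases h1 : (i : ℕ) = p - 1 - a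
        · fin_cases r <;> simp [vWord, d32, h1, Fin.ext_iff, this]
        · fin_cases r <;> simp [vWord, d32, h0, h1, Fin.ext_iff]
  have f2 : pull (d32 k 2) tt (vWord p a) = 0 := by
    rw [pull_of_map _ _ _ (fun i => if (i : ℕ) = 0 then 0 else 1)]
    · have hs : ∑ i : Fin p, ((i : ℕ) : k) = 0 := by
        have h2 : (2 : k) ≠ 0 := by
          have := CharP.cast_eq_zero_iff k p 2
          intro h
          have := Nat.le_of_dvd (by norm_num) (this.mp (by exact_mod_cast h))
          omega
        rw [Fin.sum_univ_eq_sum_range (fun i => (i : k)) p]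
        have := congrArg (Nat.cast : ℕ → k) (Finset.sum_range_id_mul_two p)
        push_cast at this
        rw [hp0, zero_mul] at this
        exact (mul_eq_zero.mp this).resolve_right h2
      rw [tt, div_eq_zero_iff]
      left
      rw [← hs]
      refine sum_congr rfl fun i _ => ?_
      by_cases h0 : (i : ℕ) = 0 <;> simp [h0]
    · intro i r
      have : p - 1 - a ≠ 0 := by omega
      by_cases h0 : (i : ℕ) = 0
      · fin_cases r <;> simp [vWord, d32, h0]
      · by_cases h1 : (i : ℕ) = p - 1 - a
        · fin_cases r <;> simp [vWord, d32, h1, this]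
        · fin_cases r <;> simp [vWord, d32, h0, h1]
  rw [phi, Fin.sum_univ_four, f0, f1, f2, f3]
  simp

/-- The cocycle, read as a functional on invariant tensors, takes the value
`1 - 2 + 3 - ⋯ - (p - 1) = -(p - 1) / 2` on `v`. -/
lemma ev_vEl [Fact p.Prime] [CharP k p] [NeZero p] (hp3 : 3 ≤ p) :
    ev (fun w => theta w * phi w) (vEl k p) ≠ 0 := by
  have h1 : ev (fun w => theta w * phi w) (vEl k p)
      = ∑ a ∈ range (p - 1), (-1 : k) ^ a * (a + 1) := by
    simp only [vEl, map_sum, map_smul, smul_eq_mul]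
    refine sum_congr rfl fun a ha => ?_
    congr 1
    rw [← phi_vWord hp3 a (mem_range.mp ha), ← sum_theta_mul_phi, Finset.sum_range]
    refine sum_congr rfl fun c _ => ?_
    rw [cyc_iterate]
    have := ev_basis (fun w => theta w * phi w) (rot (Fin.ofNat p c) (vWord p a)) (k := k)
    simp only [rot] at this
    rw [this]
    simp
  have h2 : ∀ q : ℕ, ∑ a ∈ range (2 * q), (-1 : k) ^ a * (a + 1) = -q := by
    intro q
    induction q with
    | zero => simp
    | succ q ih =>
      rw [Nat.mul_succ, sum_range_succ, sum_range_succ, ih, pow_succ, pow_mul]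
      push_cast
      simp
      ring
  obtain ⟨q, hq⟩ : ∃ q, p - 1 = 2 * q := by
    obtain ⟨q, hq⟩ := (Fact.out : p.Prime).eq_two_or_odd'.resolve_left (by omega)
    exact ⟨q, by omega⟩
  rw [h1, hq, h2, neg_ne_zero, Ne, CharP.cast_eq_zero_iff k p]
  exact Nat.not_dvd_of_pos_of_lt (by omega) (by omega)

end Cocycle

/-! ### Nonexistence of `u` -/

theorem statement2 (k : Type) [Field k] [Fintype k] (p : ℕ) [Fact p.Prime] [CharP k p]
    (hp3 : 3 ≤ p) :
    ¬ ∃ u : TP k p 4, cyc k p 4 u = u ∧ tpow k p (d43 k 0) u = vEl k p ∧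
        ∀ i : Fin 5, i ≠ 0 → tpow k p (d43 k i) u = 0 := by
  have : NeZero p := ⟨by omega⟩
  rintro ⟨u, hu, h0, hi⟩
  apply ev_vEl (k := k) hp3
  have h1 : ev (fun w => ∑ i : Fin 5, (-1 : k) ^ (i : ℕ) *
      pull (d43 k i) (fun y => theta y * phi y) w) u = 0 := by
    refine ev_eq_zero u hu _ (fun w hw => ?_) (fun w => ?_)
    · refine sum_eq_zero fun i _ => ?_
      rw [pull_const _ _ _ (fun y hy => by rw [phi_const y hy, mul_zero]) w hw, mul_zero]
      intro c r r'
      fin_cases i <;> fin_cases c <;> fin_cases r <;> fin_cases r' <;> simp [d43]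
    · rw [sum_comm]
      simp only [← mul_sum, pull_rot, ← pull_sum, sum_theta_mul_phi]
      exact coboundary_phi w
  rw [ev_sum, sum_eq_single 0] at h1
  · rw [← h0, ev_tpow]
    simpa using h1
  · intro i _ hne
    rw [ev_smul, ← ev_tpow, hi i hne, map_zero, mul_zero]
  · simp
end
end

section
/- There exists a k-linear functional ν : (k^3)^{⊗p} → k such that ν(v) = (1-p)/2, which is nonzero in k, and such that ν(d_2^{⊗p}(u)) = 0 for every Z/pZ-invariant element u ∈ (k^4)^{⊗p} satisfying d_0^{⊗p}(u) = d_1^{⊗p}(u) = d_3^{⊗p}(u) = d_4^{⊗p}(u) = 0. -/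
/-!
Expand tensors in the basis of words `w : Fin p → Fin n`. A word on the letters `0, …, n - 1` in
which every letter occurs is an ordered set partition of the cyclic set of positions, i.e. a chain
of `n - 1` proper nonempty subsets `{i | w i < 1} ⊂ {i | w i < 2} ⊂ ⋯`, and merging adjacent letters
deletes a member of the chain. So three-letter words are the edges, and four-letter words the
triangles, of a triangulated `(p-2)`-sphere (the Coxeter complex) on which `ℤ/p` acts freely, and
the functional wanted is a `1`-cocycle on the quotient lens space whose class generates
`H¹ = Hom(ℤ/p, k)`.

Such a cocycle comes from a function `Φ` on subsets with `Φ (S + 1) = Φ S + 1`, and the mean position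
`Φ S = (∑ i ∈ S, i) / |S| ∈ ℤ/p` (`Phi`, `Phi_rotate`) has this property for proper nonempty `S`. The
edge `A ⊂ A'` receives the rotation-invariant value `-(Φ A' - Φ A)`; to obtain a functional on words
it is concentrated on the one representative of each orbit with `Φ A = 0` (`nuF`).

For a chain `A ⊂ A' ⊂ A''` coming from `u`, the functional on `d₂ u` sums `-Φ A''` over `Φ A = 0`.
The relation `d₃ u = 0` permits subtracting `Φ A'` over `Φ A = 0`, and `d₁ u = 0` permits subtracting
`Φ A''` over `Φ A' = 0`. What is left vanishes because, for an invariant summand, summing over the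
representatives with `Φ A = 0` or over those with `Φ A' = 0` gives the same result
(`sum_slice_eq`). The relations `d₀ u = 0` and `d₄ u = 0` ensure that only words with `A` nonempty and
`A''` proper occur.
-/

open scoped TensorProduct
open PiTensorProduct

noncomputable section

/-- The coefficient of a tensor at the word `w`. -/
def coordW (R : Type) [CommRing R] (p n : ℕ) (w : Fin p → Fin n) : TP R p n →ₗ[R] R :=
  PiTensorProduct.lift ((MultilinearMap.mkPiAlgebra R (Fin p) R).compLinearMap
    fun i => LinearMap.proj (w i))

/-- The linear functional whose value on the basis tensor of the word `w` is `F w`. -/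
def wordFun (R : Type) [CommRing R] (p n : ℕ) (F : (Fin p → Fin n) → R) : TP R p n →ₗ[R] R :=
  ∑ w, F w • coordW R p n w

lemma coordW_tprod (R : Type) [CommRing R] (p n : ℕ) (w : Fin p → Fin n)
    (f : Fin p → Fin n → R) : coordW R p n w (tprod R f) = ∏ i, f i (w i) := by
  simp [coordW]

lemma wordFun_apply (R : Type) [CommRing R] (p n : ℕ) (F : (Fin p → Fin n) → R)
    (u : TP R p n) : wordFun R p n F u = ∑ w, F w * coordW R p n w u := by
  simp [wordFun]

lemma wordFun_single (R : Type) [CommRing R] (p n : ℕ) (F : (Fin p → Fin n) → R)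
    (w : Fin p → Fin n) :
    wordFun R p n F (tprod R fun i => (Pi.single (w i) 1 : Fin n → R)) = F w := by
  rw [wordFun_apply, Finset.sum_eq_single w]
  · simp [coordW_tprod]
  · intro w' _ hw
    obtain ⟨i, hi⟩ := Function.ne_iff.mp hw
    rw [coordW_tprod, Finset.prod_eq_zero (Finset.mem_univ i), mul_zero]
    simp [hi]
  · simp

lemma coordW_cyc (R : Type) [CommRing R] (p n : ℕ) (w : Fin p → Fin n) (u : TP R p n) :
    coordW R p n w (cyc R p n u) = coordW R p n (w ∘ finRotate p) u := by
  have : coordW R p n w ∘ₗ (cyc R p n).toLinearMap = coordW R p n (w ∘ finRotate p) := by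
    apply PiTensorProduct.ext
    refine MultilinearMap.ext fun f => ?_
    simp only [LinearMap.compMultilinearMap_apply, LinearMap.comp_apply, LinearEquiv.coe_coe, cyc,
      coordW_tprod]
    erw [PiTensorProduct.reindex_tprod]
    rw [coordW_tprod]
    exact (Fintype.prod_equiv (finRotate p) _ _ fun i => by
      simp only [Function.comp_apply, Equiv.symm_apply_apply]).symm
  exact LinearMap.congr_fun this u

lemma cyc_iterate_single (R : Type) [CommRing R] (p n : ℕ) (w : Fin p → Fin n) (j : ℕ) :
    (⇑(cyc R p n))^[j] (tprod R fun i => (Pi.single (w i) 1 : Fin n → R)) =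
      tprod R fun i =>
        (Pi.single (((fun w' : Fin p → Fin n => w' ∘ (finRotate p).symm)^[j] w) i) 1 :
          Fin n → R) := by
  induction j generalizing w with
  | zero => rfl
  | succ j ih =>
    rw [Function.iterate_succ_apply, Function.iterate_succ_apply, ← ih]
    congr 1
    unfold cyc
    erw [PiTensorProduct.reindex_tprod]
    rfl

/-- If the matrix `A` sends each basis vector `b_c` to `b_{m c}`, then pulling a functional back
along `A^{⊗p}` relabels words by `m`. -/
lemma wordFun_tpow (R : Type) [CommRing R] (p : ℕ) {n n' : ℕ} (A : Matrix (Fin n) (Fin n') R)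
    (m : Fin n' → Fin n) (hA : ∀ r c, A r c = if m c = r then 1 else 0)
    (F : (Fin p → Fin n) → R) (u : TP R p n') :
    wordFun R p n F (tpow R p A u) = ∑ w, F (m ∘ w) * coordW R p n' w u := by
  rw [← wordFun_apply R p n' (fun w => F (m ∘ w))]
  have : wordFun R p n F ∘ₗ tpow R p A = wordFun R p n' (fun w => F (m ∘ w)) := by
    apply PiTensorProduct.ext
    refine MultilinearMap.ext fun f => ?_
    simp only [LinearMap.compMultilinearMap_apply, LinearMap.comp_apply, tpow,
      PiTensorProduct.map_tprod, wordFun_apply, coordW_tprod, Matrix.mulVecLin_apply,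
      Matrix.mulVec, dotProduct, hA, Finset.prod_univ_sum, Finset.mul_sum, Fintype.piFinset_univ]
    rw [Finset.sum_comm]
    refine Finset.sum_congr rfl fun w _ => ?_
    rw [Finset.sum_eq_single (m ∘ w)]
    · simp
    · intro w' _ hw
      obtain ⟨i, hi⟩ := Function.ne_iff.mp hw
      rw [Finset.prod_eq_zero (Finset.mem_univ i), mul_zero]
      exact mul_eq_zero_of_left (if_neg (Ne.symm hi)) _
    · simp
  exact LinearMap.congr_fun this u

/-- If the rows of `A` are the standard basis covectors `b*_{g r}`, then the coefficients of
`A^{⊗p} u` are among those of `u`. -/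
lemma coordW_tpow (R : Type) [CommRing R] (p : ℕ) {n n' : ℕ} (A : Matrix (Fin n) (Fin n') R)
    (g : Fin n → Fin n') (hA : ∀ r c, A r c = if g r = c then 1 else 0)
    (w : Fin p → Fin n) (u : TP R p n') :
    coordW R p n w (tpow R p A u) = coordW R p n' (g ∘ w) u := by
  have : coordW R p n w ∘ₗ tpow R p A = coordW R p n' (g ∘ w) := by
    apply PiTensorProduct.ext
    refine MultilinearMap.ext fun f => ?_
    simp [tpow, PiTensorProduct.map_tprod, coordW_tprod, Matrix.mulVec, dotProduct, hA]
  exact LinearMap.congr_fun this u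

/-- The mean position `(∑ i ∈ S, i) / |S|` in `ℤ/p` of a set `S` of tensor factors (`0` if `S` is
empty or everything). -/
def Phi (p : ℕ) [Fact p.Prime] (S : Finset (Fin p)) : ZMod p :=
  (∑ i ∈ S, ((i : ℕ) : ZMod p)) * ((S.card : ZMod p))⁻¹

/-- The mean position of the letters of `w` smaller than `m`. -/
def hgt (p n m : ℕ) [Fact p.Prime] (w : Fin p → Fin n) : ZMod p :=
  Phi p (Finset.univ.filter fun i => (w i : ℕ) < m)

lemma finRotate_cast (p : ℕ) (i : Fin p) :
    ((finRotate p i : ℕ) : ZMod p) = ((i : ℕ) : ZMod p) + 1 := by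
  obtain _ | q := p
  · exact i.elim0
  · rw [coe_finRotate]
    split_ifs with h
    · subst h
      simp
    · push_cast; rfl

lemma Phi_rotate (p : ℕ) [Fact p.Prime] (S : Finset (Fin p)) (h0 : S.Nonempty)
    (h1 : S ≠ Finset.univ) : Phi p (S.map (finRotate p).toEmbedding) = Phi p S + 1 := by
  have hc : ((S.card : ℕ) : ZMod p) ≠ 0 := by
    rw [Ne, ZMod.natCast_eq_zero_iff]
    intro h
    have h2 := Nat.le_of_dvd h0.card_pos h
    have h3 := (Finset.card_lt_iff_ne_univ S).2 h1
    rw [Fintype.card_fin] at h3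
    omega
  simp only [Phi, Finset.sum_map, Finset.card_map, Equiv.coe_toEmbedding, finRotate_cast,
    Finset.sum_add_distrib, Finset.sum_const, nsmul_eq_mul, mul_one]
  field_simp

lemma hgt_rotate (p n m : ℕ) [Fact p.Prime] (w : Fin p → Fin n) (h0 : ∃ i, (w i : ℕ) < m)
    (h1 : ∃ i, m ≤ (w i : ℕ)) : hgt p n m (w ∘ finRotate p) = hgt p n m w - 1 := by
  have key := Phi_rotate p (Finset.univ.filter fun i => ((w ∘ finRotate p) i : ℕ) < m)
    (by
      obtain ⟨i, hi⟩ := h0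
      exact ⟨(finRotate p).symm i, by simpa using hi⟩)
    (by
      obtain ⟨i, hi⟩ := h1
      intro h
      have := h ▸ Finset.mem_univ ((finRotate p).symm i)
      simp at this
      omega)
  have hS : (Finset.univ.filter fun i => ((w ∘ finRotate p) i : ℕ) < m).map
      (finRotate p).toEmbedding = Finset.univ.filter fun i => (w i : ℕ) < m := by
    ext i
    simp only [Finset.mem_map_equiv, Finset.mem_filter, Finset.mem_univ, true_and,
      Function.comp_apply, Equiv.apply_symm_apply]
  rw [hS] at key
  simp only [hgt, key, add_sub_cancel_right]

/-- For an invariant weight `X` and two functions to `ℤ/p` that `r` shifts by `-1` on the support of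
`X`, the zero sets of both functions carry the same total weight: each meets every orbit of the
support once. -/
lemma sum_slice_eq {α k : Type} [Fintype α] [CommRing k] (p : ℕ) [Fact p.Prime]
    (r : Equiv.Perm α) (X : α → k) (h1 h2 : α → ZMod p) (hX : ∀ w, X (r w) = X w)
    (e1 : ∀ w, X w ≠ 0 → h1 (r w) = h1 w - 1) (e2 : ∀ w, X w ≠ 0 → h2 (r w) = h2 w - 1) :
    (∑ w, if h1 w = 0 then X w else 0) = ∑ w, if h2 w = 0 then X w else 0 := by
  have hXn : ∀ (n : ℕ) w, X ((r ^ n) w) = X w := by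
    intro n
    induction n with
    | zero => simp
    | succ n ih => intro w; rw [pow_succ', Equiv.Perm.mul_apply, hX, ih]
  have hn : ∀ h : α → ZMod p, (∀ w, X w ≠ 0 → h (r w) = h w - 1) →
      ∀ (n : ℕ) w, X w ≠ 0 → h ((r ^ n) w) = h w - n := by
    intro h e n w hw
    induction n with
    | zero => simp
    | succ n ih =>
      rw [pow_succ', Equiv.Perm.mul_apply, e _ (by rwa [hXn]), ih]
      push_cast; ring
  have l : ∀ w, (if h1 w = 0 then X w else 0) =
      ∑ t : ZMod p, if h1 w = 0 ∧ h2 w = t then X w else 0 := by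
    intro w
    by_cases h : h1 w = 0 <;> simp [h]
  have l' : ∀ w, (if h2 w = 0 then X w else 0) =
      ∑ t : ZMod p, if h2 w = 0 ∧ h1 w = -t then X w else 0 := by
    intro w
    simp_rw [← neg_eq_iff_eq_neg]
    by_cases h : h2 w = 0 <;> simp [h]
  simp_rw [l, l']
  rw [Finset.sum_comm, Finset.sum_comm (s := Finset.univ (α := α))]
  refine Finset.sum_congr rfl fun t _ => ?_
  refine Fintype.sum_equiv (r ^ t.val) _ _ fun w => ?_
  rw [hXn]
  by_cases hw : X w = 0
  · simp [hw]
  · rw [hn h1 e1 _ _ hw, hn h2 e2 _ _ hw, ZMod.natCast_zmod_val]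
    congr 1
    rw [sub_eq_zero, sub_eq_neg_self, and_comm]

/-- The cocycle on three-letter words: `-Φ {i | w i ≤ 1}` on the orbit representatives with
`Φ {i | w i = 0} = 0`. -/
def nuF (k : Type) [Field k] (p : ℕ) [Fact p.Prime] [CharP k p] (w : Fin p → Fin 3) : k :=
  if hgt p 3 1 w = 0 then -ZMod.castHom (dvd_refl p) k (hgt p 3 2 w) else 0

lemma hgt_relabel (p n n' m m' : ℕ) [Fact p.Prime] (c : Fin n' → Fin n)
    (h : ∀ x, (c x : ℕ) < m ↔ (x : ℕ) < m') (w : Fin p → Fin n') :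
    hgt p n m (c ∘ w) = hgt p n' m' w := by
  simp only [hgt, Function.comp_apply, h]

lemma nuF_d2_eq_zero (k : Type) [Field k] (p : ℕ) [Fact p.Prime] [CharP k p]
    (u : TP k p 4) (hu : cyc k p 4 u = u)
    (u0 : tpow k p (d43 k 0) u = 0) (u1 : tpow k p (d43 k 1) u = 0)
    (u3 : tpow k p (d43 k 3) u = 0) (u4 : tpow k p (d43 k 4) u = 0) :
    wordFun k p 3 (nuF k p) (tpow k p (d43 k 2) u) = 0 := by
  set X : (Fin p → Fin 4) → k := fun w => coordW k p 4 w u with hXdef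
  set φ := ZMod.castHom (dvd_refl p) k
  have inv : ∀ w, X (w ∘ finRotate p) = X w := by
    intro w
    simp only [hXdef]
    rw [← coordW_cyc, hu]
  have ex0 : ∀ w, X w ≠ 0 → ∃ i, w i = 0 := by
    intro w hw
    by_contra! h
    apply hw
    have := coordW_tpow k p (d43 k 0) Fin.succ
      (by intro a b; fin_cases a <;> fin_cases b <;> simp [d43, Fin.ext_iff])
      (fun i => (w i).pred (h i)) u
    rw [u0, map_zero] at this
    rw [hXdef]
    convert this.symm using 2
    ext i; simp
  have ex3 : ∀ w, X w ≠ 0 → ∃ i, w i = 3 := by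
    intro w hw
    by_contra! h
    apply hw
    have := coordW_tpow k p (d43 k 4) Fin.castSucc
      (by intro a b; fin_cases a <;> fin_cases b <;> simp [d43, Fin.ext_iff])
      (fun i => (w i).castPred (h i)) u
    rw [u4, map_zero] at this
    rw [hXdef]
    convert this.symm using 2
    ext i; simp
  have equi : ∀ m, 1 ≤ m → m ≤ 3 → ∀ w, X w ≠ 0 →
      hgt p 4 m (w ∘ finRotate p) = hgt p 4 m w - 1 := by
    intro m hm hm' w hw
    obtain ⟨i, hi⟩ := ex0 w hw
    obtain ⟨j, hj⟩ := ex3 w hw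
    exact hgt_rotate p 4 m w ⟨i, by simp [hi]; omega⟩ ⟨j, by simp [hj]; omega⟩
  have E2 := wordFun_tpow k p (d43 k 2) ![0, 1, 1, 2]
    (by intro a b; fin_cases a <;> fin_cases b <;> simp [d43]) (nuF k p) u
  have E1 := wordFun_tpow k p (d43 k 1) ![0, 0, 1, 2]
    (by intro a b; fin_cases a <;> fin_cases b <;> simp [d43]) (nuF k p) u
  have E3 := wordFun_tpow k p (d43 k 3) ![0, 1, 2, 2]
    (by intro a b; fin_cases a <;> fin_cases b <;> simp [d43]) (nuF k p) u
  rw [u1, map_zero] at E1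
  rw [u3, map_zero] at E3
  simp only [nuF] at E1 E2 E3
  simp only [hgt_relabel p 3 4 1 1 ![0, 1, 1, 2] (by decide),
    hgt_relabel p 3 4 2 3 ![0, 1, 1, 2] (by decide)] at E2
  simp only [hgt_relabel p 3 4 1 2 ![0, 0, 1, 2] (by decide),
    hgt_relabel p 3 4 2 3 ![0, 0, 1, 2] (by decide)] at E1
  simp only [hgt_relabel p 3 4 1 1 ![0, 1, 2, 2] (by decide),
    hgt_relabel p 3 4 2 2 ![0, 1, 2, 2] (by decide)] at E3
  have S := sum_slice_eq p
    (Equiv.arrowCongr (finRotate p).symm (Equiv.refl (Fin 4)))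
    (fun w => X w * φ (hgt p 4 3 w - hgt p 4 2 w)) (hgt p 4 1) (hgt p 4 2)
    (by
      intro w
      change X (w ∘ finRotate p) * φ (hgt p 4 3 (w ∘ finRotate p) - hgt p 4 2 (w ∘ finRotate p)) = _
      rw [inv]
      by_cases hw : X w = 0
      · simp [hw]
      · rw [equi 3 (by norm_num) (by norm_num) w hw, equi 2 (by norm_num) (by norm_num) w hw,
          sub_sub_sub_cancel_right])
    (fun w hw => equi 1 (by norm_num) (by norm_num) w (left_ne_zero_of_mul hw))
    (fun w hw => equi 2 (by norm_num) (by norm_num) w (left_ne_zero_of_mul hw))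
  rw [E2]
  refine Eq.trans ?_ ((congrArg₂ (· - ·) (congrArg₂ (· + ·) E3.symm E1.symm)
    (sub_eq_zero.2 S)).trans (by simp))
  simp only [← Finset.sum_sub_distrib, ← Finset.sum_add_distrib]
  refine Finset.sum_congr rfl fun w _ => ?_
  -- On the slice `h₂ = 0` the term `φ (h₃ - h₂)` is `φ h₃`.
  by_cases a : hgt p 4 1 w = 0 <;> by_cases b : hgt p 4 2 w = 0 <;>
    simp only [a, b, X, φ, if_true, if_false, map_sub, map_zero] <;> ring

lemma hgt_one_vWord (p a : ℕ) [Fact p.Prime] : hgt p 3 1 (vWord p a) = 0 := by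
  have : ∑ i ∈ Finset.univ.filter (fun i => (vWord p a i : ℕ) < 1), ((i : ℕ) : ZMod p) = 0 := by
    refine Finset.sum_eq_zero fun i hi => ?_
    have : (i : ℕ) = 0 := by
      by_contra h
      replace hi := (Finset.mem_filter.1 hi).2
      simp only [vWord, h, if_false] at hi
      split_ifs at hi <;> simp at hi
    simp [this]
  rw [hgt, Phi, this, zero_mul]

lemma hgt_two_vWord (p a : ℕ) [Fact p.Prime] (hp3 : 3 ≤ p) (ha : a < p - 1) :
    hgt p 3 2 (vWord p a) = -(a + 1) := by
  have hS : Finset.univ.filter (fun i => (vWord p a i : ℕ) < 2) =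
      Finset.univ.erase (⟨p - 1 - a, by omega⟩ : Fin p) := by
    ext i
    rw [Finset.mem_filter]
    simp only [vWord, Finset.mem_univ, true_and, Finset.mem_erase, and_true,
      Ne, Fin.ext_iff]
    split_ifs with h1 h2
    · simp; omega
    · simp [h2]
    · simp [h2]
  have hsum : ∑ i : Fin p, ((i : ℕ) : ZMod p) = 0 := by
    rw [Fin.sum_univ_eq_sum_range (fun i => ((i : ℕ) : ZMod p)), ← Nat.cast_sum,
      ZMod.natCast_eq_zero_iff]
    have hd : p ∣ (∑ i ∈ Finset.range p, i) * 2 := by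
      rw [Finset.sum_range_id_mul_two]; exact dvd_mul_right _ _
    rcases (Fact.out : p.Prime).dvd_mul.1 hd with h | h
    · exact h
    · exact absurd (Nat.le_of_dvd two_pos h) (by omega)
  rw [hgt, hS, Phi, Finset.card_erase_of_mem (Finset.mem_univ _), Finset.card_univ,
    Fintype.card_fin, Finset.sum_erase_eq_sub (Finset.mem_univ _), hsum]
  have h1 : ((p - 1 : ℕ) : ZMod p) = -1 := by
    rw [Nat.cast_sub (by omega)]; simp
  rw [Nat.cast_sub (by omega), h1, inv_neg, inv_one]
  ring

/-- Of the `p` rotations of a summand of `v`, only the unrotated one is a representative seen by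
`nuF`. -/
lemma sum_nuF_rotations (k : Type) [Field k] (p : ℕ) [Fact p.Prime] [CharP k p] (hp3 : 3 ≤ p)
    (a : ℕ) (ha : a < p - 1) :
    ∑ j ∈ Finset.range p, nuF k p
      ((fun w' : Fin p → Fin 3 => w' ∘ (finRotate p).symm)^[j] (vWord p a)) = a + 1 := by
  have hj : ∀ j, hgt p 3 1 ((fun w' : Fin p → Fin 3 => w' ∘ (finRotate p).symm)^[j]
        (vWord p a)) = j ∧
      (∃ i, (((fun w' : Fin p → Fin 3 => w' ∘ (finRotate p).symm)^[j] (vWord p a)) i : ℕ) < 1) ∧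
      ∃ i, 1 ≤ (((fun w' : Fin p → Fin 3 => w' ∘ (finRotate p).symm)^[j] (vWord p a)) i : ℕ) := by
    intro j
    induction j with
    | zero =>
      refine ⟨by rw [Function.iterate_zero, id, hgt_one_vWord p a, Nat.cast_zero],
        ⟨⟨0, by omega⟩, by simp [vWord]⟩, ⟨⟨1, by omega⟩, ?_⟩⟩
      simp only [Function.iterate_zero, id, vWord]
      rw [if_neg one_ne_zero]
      split_ifs <;> simp
    | succ j ih =>
      rw [Function.iterate_succ_apply']
      set w := (fun w' : Fin p → Fin 3 => w' ∘ (finRotate p).symm)^[j] (vWord p a)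
      obtain ⟨h, ⟨i, hi⟩, ⟨i', hi'⟩⟩ := ih
      have x0 : ∃ i, ((w ∘ (finRotate p).symm) i : ℕ) < 1 := ⟨finRotate p i, by simpa using hi⟩
      have x1 : ∃ i, 1 ≤ ((w ∘ (finRotate p).symm) i : ℕ) :=
        ⟨finRotate p i', by simpa using hi'⟩
      refine ⟨?_, x0, x1⟩
      have := hgt_rotate p 3 1 _ x0 x1
      rw [Function.comp_assoc, Equiv.symm_comp_self, Function.comp_id, h] at this
      push_cast
      linear_combination -this
  rw [Finset.sum_eq_single 0]
  · simp [nuF, hgt_one_vWord p a, hgt_two_vWord p a hp3 ha]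
  · intro j hjp hj0
    rw [nuF, (hj j).1, if_neg]
    rw [ZMod.natCast_eq_zero_iff]
    intro hd
    have := Nat.le_of_dvd (Nat.pos_of_ne_zero hj0) hd
    simp at hjp
    omega
  · simp; omega

lemma alternating_sum (k : Type) [CommRing k] (m : ℕ) :
    ∑ a ∈ Finset.range (2 * m), (-1 : k) ^ a * ((a : k) + 1) = -m := by
  induction m with
  | zero => simp
  | succ m ih =>
    rw [show 2 * (m + 1) = 2 * m + 1 + 1 by ring, Finset.sum_range_succ, Finset.sum_range_succ, ih,
      pow_succ, pow_mul]
    push_cast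
    simp
    ring

theorem statement12 (k : Type) [Field k] [Fintype k] (p : ℕ) [Fact p.Prime] [CharP k p]
    (hp3 : 3 ≤ p) :
    ∃ ν : TP k p 3 →ₗ[k] k,
      ν (vEl k p) = (((1 - (p : ℤ)) / 2 : ℤ) : k) ∧
      (((1 - (p : ℤ)) / 2 : ℤ) : k) ≠ 0 ∧
      ∀ u : TP k p 4, cyc k p 4 u = u →
        tpow k p (d43 k 0) u = 0 → tpow k p (d43 k 1) u = 0 →
        tpow k p (d43 k 3) u = 0 → tpow k p (d43 k 4) u = 0 →
        ν (tpow k p (d43 k 2) u) = 0 := by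
  obtain ⟨m, hm⟩ : ∃ m, p = 2 * m + 1 :=
    (Fact.out : p.Prime).odd_of_ne_two (by omega)
  have hdiv : (1 - (p : ℤ)) / 2 = -m := by omega
  refine ⟨wordFun k p 3 (nuF k p), ?_, ?_, fun u hu u0 u1 u3 u4 =>
    nuF_d2_eq_zero k p u hu u0 u1 u3 u4⟩
  · rw [hdiv]
    simp only [vEl, map_sum, map_smul, cyc_iterate_single, wordFun_single]
    rw [Finset.sum_congr rfl fun a ha => by
      rw [sum_nuF_rotations k p hp3 a (Finset.mem_range.1 ha), smul_eq_mul]]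
    rw [show p - 1 = 2 * m by omega, alternating_sum]
    simp
  · rw [hdiv]
    push_cast
    rw [neg_ne_zero, Ne, CharP.cast_eq_zero_iff k p]
    intro h
    have := Nat.le_of_dvd (by omega) h
    omega
end
end
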